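/- Let T be a finite tree and let A be an independent set of vertices of T each of which has degree exactly 2 in T. Then T has a matching that saturates every vertex of A (i.e., every vertex of A is an endpoint of some matching edge). -/

import Mathlib

open SimpleGraph

/-- The degree of a vertex, as `Nat.card` of its neighbor set. -/
noncomputable def vdeg {V : Type*} (G : SimpleGraph V) (v : V) : ℕ :=
  Nat.card (G.neighborSet v)

/-- `G` has maximum degree exactly `k`. -/
def MaxDegreeEq {V : Type*} (G : SimpleGraph V) (k : ℕ) : Prop :=
  (∀ v, vdeg G v ≤ k) ∧ ∃ v, vdeg G v = k

/-- `G` admits a total `k`-coloring: a coloring of vertices and edges with `k` colors such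
that adjacent vertices get distinct colors, edges sharing an endpoint get distinct colors,
and each edge gets a color distinct from those of its endpoints. -/
def TotallyColorable {V : Type*} (G : SimpleGraph V) (k : ℕ) : Prop :=
  ∃ (cv : V → Fin k) (ce : Sym2 V → Fin k),
    (∀ ⦃u v⦄, G.Adj u v → cv u ≠ cv v) ∧
    (∀ e₁ ∈ G.edgeSet, ∀ e₂ ∈ G.edgeSet, e₁ ≠ e₂ → (∃ x, x ∈ e₁ ∧ x ∈ e₂) →
      ce e₁ ≠ ce e₂) ∧
    (∀ ⦃u v⦄, G.Adj u v → ce s(u, v) ≠ cv u)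

/-- The diamond: `K₄` minus one edge. -/
def diamondGraph : SimpleGraph (Fin 4) :=
  SimpleGraph.fromEdgeSet {s(0, 1), s(0, 2), s(0, 3), s(1, 2), s(1, 3)}

/-- The house: a `4`-cycle `1 2 3 4` and a triangle `0 1 4` sharing exactly the edge `{1,4}`
(equivalently, a `5`-cycle plus one chord). -/
def houseGraph : SimpleGraph (Fin 5) :=
  SimpleGraph.fromEdgeSet {s(0, 1), s(1, 2), s(2, 3), s(3, 4), s(4, 0), s(1, 4)}

/-- `G` contains a (not necessarily induced) subgraph isomorphic to `H`. -/
def ContainsCopy {α β : Type*} (H : SimpleGraph α) (G : SimpleGraph β) : Prop :=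
  ∃ f : α → β, Function.Injective f ∧ ∀ ⦃u v⦄, H.Adj u v → G.Adj (f u) (f v)

/-- `v` is incident with two distinct `4`-cycles of `G` that share an edge. -/
def TwoAdjacentFourCyclesAt {V : Type*} (G : SimpleGraph V) (v : V) : Prop :=
  ∃ (c₁ c₂ : G.Walk v v), c₁.IsCycle ∧ c₂.IsCycle ∧ c₁.length = 4 ∧ c₂.length = 4 ∧
    {e | e ∈ c₁.edges} ≠ {e | e ∈ c₂.edges} ∧ ∃ e, e ∈ c₁.edges ∧ e ∈ c₂.edges

/-- `v` is incident with three pairwise distinct cycles of `G`, of lengths `p`, `q`, `ℓ`. -/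
def ThreeCyclesAt {V : Type*} (G : SimpleGraph V) (v : V) (p q ℓ : ℕ) : Prop :=
  ∃ (c₁ c₂ c₃ : G.Walk v v), c₁.IsCycle ∧ c₂.IsCycle ∧ c₃.IsCycle ∧
    c₁.length = p ∧ c₂.length = q ∧ c₃.length = ℓ ∧
    {e | e ∈ c₁.edges} ≠ {e | e ∈ c₂.edges} ∧
    {e | e ∈ c₁.edges} ≠ {e | e ∈ c₃.edges} ∧
    {e | e ∈ c₂.edges} ≠ {e | e ∈ c₃.edges}

/-- Every `6`-vertex of `G` is not incident with two `4`-cycles sharing an edge, or is not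
incident with three cycles of sizes `p, q, ℓ` for any `{p,q,ℓ} ∈ {{3,4,4},{3,3,4}}`. -/
def Good6Vertices {V : Type*} (G : SimpleGraph V) : Prop :=
  ∀ v, vdeg G v = 6 →
    (¬ TwoAdjacentFourCyclesAt G v) ∨
    (∀ p q ℓ : ℕ, (({p, q, ℓ} : Multiset ℕ) = {3, 4, 4} ∨ ({p, q, ℓ} : Multiset ℕ) = {3, 3, 4}) →
      ¬ ThreeCyclesAt G v p q ℓ)

/-- Reversal of darts, as a permutation. -/
def dartRev {V : Type*} (G : SimpleGraph V) : Equiv.Perm G.Dart :=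
  Function.Involutive.toPerm SimpleGraph.Dart.symm SimpleGraph.Dart.symm_involutive

/-- A rotation system (combinatorial embedding) of `G`: a permutation of the darts whose
orbits are exactly the sets of darts emanating from each single vertex. -/
structure RotationSystem {V : Type*} (G : SimpleGraph V) where
  σ : Equiv.Perm G.Dart
  tail_fixed : ∀ d : G.Dart, (σ d).fst = d.fst
  vertex_cycles : ∀ d d' : G.Dart, d.fst = d'.fst → σ.SameCycle d d'

namespace RotationSystem

variable {V : Type*} {G : SimpleGraph V}

/-- The face-tracing permutation of a rotation system. -/
def φ (R : RotationSystem G) : Equiv.Perm G.Dart :=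
  R.σ * dartRev G

/-- Two darts lie on the same face iff they are in the same orbit of the face-tracing
permutation. -/
def faceSetoid (R : RotationSystem G) : Setoid G.Dart where
  r := R.φ.SameCycle
  iseqv := ⟨fun d => Equiv.Perm.SameCycle.refl _ d, Equiv.Perm.SameCycle.symm,
    Equiv.Perm.SameCycle.trans⟩

/-- The faces of the embedding: orbits of the face-tracing permutation. -/
def Faces (R : RotationSystem G) : Type _ :=
  Quotient R.faceSetoid

/-- The number of faces of the embedding. -/
noncomputable def numFaces (R : RotationSystem G) : ℕ :=
  Nat.card R.Faces

/-- The darts of the face containing the dart `d`. -/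
def faceDarts (R : RotationSystem G) (d : G.Dart) : Set G.Dart :=
  {d' | R.φ.SameCycle d d'}

/-- The degree (length of the boundary walk, cut edges counted twice) of the face
containing the dart `d`. -/
noncomputable def faceDeg (R : RotationSystem G) (d : G.Dart) : ℕ :=
  (R.faceDarts d).ncard

/-- The vertex `v` is incident with the face containing the dart `d`. -/
def FaceIncident (R : RotationSystem G) (v : V) (d : G.Dart) : Prop :=
  ∃ d' ∈ R.faceDarts d, d'.fst = v

/-- A rotation system is a plane embedding when it satisfies Euler's formula
`|V| - |E| + |F| = 2` on each connected component, i.e. `|V| + |F| = |E| + 2c`. -/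
def IsPlanarEmbedding [Fintype V] (R : RotationSystem G) : Prop :=
  Fintype.card V + R.numFaces = Nat.card G.edgeSet + 2 * Nat.card G.ConnectedComponent

end RotationSystem

/-- A graph is planar if it admits a plane embedding. -/
def IsPlanar {V : Type*} [Fintype V] (G : SimpleGraph V) : Prop :=
  ∃ R : RotationSystem G, R.IsPlanarEmbedding

/-- Conditions (1), (2), (3) on graphs in Theorem 1: planar of maximum degree 6, with no
diamond and no house subgraph, and every 6-vertex not incident with two adjacent 4-cycles
or not incident with three cycles of sizes in `{{3,4,4},{3,3,4}}`. -/
def GoodGraph {V : Type*} [Fintype V] (G : SimpleGraph V) : Prop :=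
  IsPlanar G ∧ MaxDegreeEq G 6 ∧ ¬ ContainsCopy diamondGraph G ∧
    ¬ ContainsCopy houseGraph G ∧ Good6Vertices G

/-- `H` is a minimal counterexample to the main theorem: it satisfies conditions (1)–(3),
is not totally 7-colorable, and minimizes `|V| + |E|` among all such graphs. -/
def MinimalCounterexample {V : Type*} [Fintype V] (H : SimpleGraph V) : Prop :=
  GoodGraph H ∧ ¬ TotallyColorable H 7 ∧
    ∀ (n : ℕ) (G : SimpleGraph (Fin n)), GoodGraph G → ¬ TotallyColorable G 7 →
      Fintype.card V + Nat.card H.edgeSet ≤ n + Nat.card G.edgeSet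

/-!
Root every component of a forest. A vertex then has at most one parent, so each vertex with at least
two neighbours has a child, and choosing one child for each such vertex is injective. Going down
from the roots, match a vertex to its chosen child unless it is already matched to its parent: the
vertices matched downwards form a kernel of the relation between a vertex and its chosen child.
-/

theorem exists_kernel_of_wellFounded {α : Type*} {r : α → α → Prop} (hr : WellFounded r) :
    ∃ K : Set α, ∀ a, a ∈ K ↔ ∀ b ∈ K, ¬ r b a := by
  refine ⟨{a | hr.fix (fun a inKernel ↦ ∀ b (h : r b a), ¬ inKernel b h) a}, fun a ↦ ?_⟩
  rw [Set.mem_ofPred_eq, hr.fix_eq]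
  exact forall_congr' fun b ↦ imp_not_comm

section Matching

variable {V : Type*} {G : SimpleGraph V} {A : Set V} {f : V → V}

theorem exists_isMatching_of_injOn (hinj : A.InjOn f) (hdisj : Disjoint A (f '' A))
    (hadj : ∀ a ∈ A, G.Adj a (f a)) :
    ∃ M : G.Subgraph, M.verts = A ∪ f '' A ∧ M.IsMatching :=
  Subgraph.IsMatching.exists_of_disjoint_sets_of_equiv hdisj
    (Equiv.Set.imageOfInjOn f A hinj) fun a ↦ hadj a a.2

theorem exists_isMatching_of_injOn_of_wellFounded (hinj : A.InjOn f)
    (hadj : ∀ a ∈ A, G.Adj a (f a)) (hwf : WellFounded fun a b ↦ a ∈ A ∧ f a = b) :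
    ∃ M : G.Subgraph, M.IsMatching ∧ A ⊆ M.verts := by
  obtain ⟨K, hK⟩ := exists_kernel_of_wellFounded hwf
  have hdisj : Disjoint (A ∩ K) (f '' (A ∩ K)) := by
    rw [Set.disjoint_right]
    rintro _ ⟨a, ha, rfl⟩ hfa
    exact (hK (f a)).1 hfa.2 a ha.2 ⟨ha.1, rfl⟩
  have hcover : A ⊆ A ∩ K ∪ f '' (A ∩ K) := by
    intro a ha
    by_cases haK : a ∈ K
    · exact Or.inl ⟨ha, haK⟩
    · obtain ⟨b, hbK, hbA, hba⟩ : ∃ b ∈ K, b ∈ A ∧ f b = a := by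
        simpa only [hK a, not_forall, not_not, exists_prop] using haK
      exact Or.inr ⟨b, ⟨hbA, hbK⟩, hba⟩
  obtain ⟨M, hverts, hM⟩ := exists_isMatching_of_injOn
    (hinj.mono Set.inter_subset_left) hdisj fun a ha ↦ hadj a ha.1
  exact ⟨M, hM, hverts ▸ hcover⟩

end Matching

section Forest

variable {V : Type*} {G : SimpleGraph V} {r v v' w : V}

theorem eq_of_adj_of_dist_eq_add_one (hG : G.IsAcyclic) (hv : G.Adj v w) (hv' : G.Adj v' w)
    (hd : G.dist r w = G.dist r v + 1) (hd' : G.dist r w = G.dist r v' + 1) : v = v' := by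
  have hw : G.Reachable r w := Reachable.of_dist_ne_zero (by lia)
  obtain ⟨p, hp⟩ := (hw.trans hv.symm.reachable).exists_walk_length_eq_dist
  obtain ⟨q, hq⟩ := (hw.trans hv'.symm.reachable).exists_walk_length_eq_dist
  have hpath : (p.concat hv).IsPath :=
    Walk.isPath_of_length_eq_dist _ (by rw [Walk.length_concat, hp, hd])
  have hpath' : (q.concat hv').IsPath :=
    Walk.isPath_of_length_eq_dist _ (by rw [Walk.length_concat, hq, hd'])
  have heq : p.concat hv = q.concat hv' :=
    congrArg Subtype.val ((hG.subsingleton_path r w).elim ⟨_, hpath⟩ ⟨_, hpath'⟩)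
  simpa only [Walk.penultimate_concat] using congrArg Walk.penultimate heq

/-- The depth of `v` in `G` when each component is rooted at the representative `Quot.out` picks. -/
noncomputable def rootedDepth (G : SimpleGraph V) (v : V) : ℕ :=
  G.dist (G.connectedComponentMk v).out v

/-- The parent-child relation of a rooted forest: `w` is a neighbour of `v` one level below it. -/
def IsChild (G : SimpleGraph V) (v w : V) : Prop :=
  G.Adj v w ∧ rootedDepth G w = rootedDepth G v + 1

theorem rootedDepth_eq_dist_of_adj (h : G.Adj v w) :
    rootedDepth G w = G.dist (G.connectedComponentMk v).out w := by
  rw [rootedDepth, ConnectedComponent.connectedComponentMk_eq_of_adj h]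

theorem IsChild.parent_unique (hG : G.IsAcyclic) (h : IsChild G v w) (h' : IsChild G v' w) :
    v = v' :=
  eq_of_adj_of_dist_eq_add_one hG h.1 h'.1
    (h.2.trans (congrArg (· + 1) (rootedDepth_eq_dist_of_adj h.1.symm)))
    (h'.2.trans (congrArg (· + 1) (rootedDepth_eq_dist_of_adj h'.1.symm)))

theorem isChild_or_isChild_of_adj (hG : G.IsAcyclic) (h : G.Adj v w) :
    IsChild G v w ∨ IsChild G w v := by
  have hreach : G.Reachable (G.connectedComponentMk v).out v :=
    ConnectedComponent.exact (Quot.out_eq _)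
  have hdist := hG.dist_eq_dist_add_one_of_adj_of_reachable _ h hreach
  rw [← rootedDepth_eq_dist_of_adj h] at hdist
  exact hdist.symm.imp (⟨h, ·⟩) (⟨h.symm, ·⟩)

theorem exists_isChild_of_nontrivial_neighborSet (hG : G.IsAcyclic)
    (hv : (G.neighborSet v).Nontrivial) : ∃ w, IsChild G v w := by
  obtain ⟨x, hx, y, hy, hxy⟩ := hv
  rcases isChild_or_isChild_of_adj hG hx with hvx | hxv
  · exact ⟨x, hvx⟩
  rcases isChild_or_isChild_of_adj hG hy with hvy | hyv
  · exact ⟨y, hvy⟩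
  exact absurd (hxv.parent_unique hG hyv) hxy

end Forest

theorem nontrivial_neighborSet_of_one_lt_vdeg {V : Type*} {G : SimpleGraph V} {v : V}
    (h : 1 < vdeg G v) : (G.neighborSet v).Nontrivial :=
  (Set.one_lt_ncard_iff_nontrivial_and_finite.1 h).1

theorem tree_matching_saturating_independent_degree_two_general {V : Type*} {G : SimpleGraph V}
    (hG : G.IsAcyclic) :
    ∃ M : G.Subgraph, M.IsMatching ∧ {v | (G.neighborSet v).Nontrivial} ⊆ M.verts := by
  have hchild : ∀ v, ∃ w, (G.neighborSet v).Nontrivial → IsChild G v w := fun v ↦ by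
    by_cases hv : (G.neighborSet v).Nontrivial
    · exact (exists_isChild_of_nontrivial_neighborSet hG hv).imp fun _ h _ ↦ h
    · exact ⟨v, fun h ↦ absurd h hv⟩
  choose child hchild using hchild
  refine exists_isMatching_of_injOn_of_wellFounded (f := child) ?_ (fun v hv ↦ (hchild v hv).1) ?_
  · intro u hu v hv huv
    exact (hchild u hu).parent_unique hG (huv ▸ hchild v hv)
  · refine Subrelation.wf ?_ (measure (rootedDepth G)).wf
    rintro u _ ⟨hu, rfl⟩
    exact (Nat.lt_succ_self _).trans_eq (hchild u hu).2.symm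

/-- Every finite tree has a matching saturating any given independent set of vertices of
degree exactly 2. -/
theorem tree_matching_saturating_independent_degree_two
    {V : Type*} [Fintype V] (T : SimpleGraph V) (hT : T.IsTree)
    (A : Set V) (hind : ∀ u ∈ A, ∀ v ∈ A, ¬ T.Adj u v)
    (hdeg : ∀ a ∈ A, vdeg T a = 2) :
    ∃ M : T.Subgraph, M.IsMatching ∧ A ⊆ M.verts := by
  obtain ⟨M, hM, hverts⟩ := tree_matching_saturating_independent_degree_two_general hT.isAcyclic
  exact ⟨M, hM, fun a ha ↦ hverts (nontrivial_neighborSet_of_one_lt_vdeg (hdeg a ha ▸ one_lt_two))⟩
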